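/- Let d ≥ 2, let A : ℝ^d → ℝ^{d×d} be a C¹ symmetric matrix-valued function, let b : ℝ^d → ℝ^d be C¹, let c : ℝ^d → ℝ, let f : ℝ^d → ℝ be C² with f(x) ≠ 0 for all x in an open set Ω ⊂ ℝ^d, and suppose u : ℝ^d × [0,∞) → ℝ is of class C² in time and C³ in space with continuous mixed derivatives and satisfies u_t = Lu + c·u on ℝ^d × [0,∞) with u(·,0) = f, where Lw = div(A∇w) + b·∇w. Then the function v := ∂_t u satisfies, for all x ∈ Ω and t ∈ [0,T], the nonlinear equation v_t(x,t) = Lv(x,t) − (Lf(x)/f(x)) v(x,t) + (v(x,0)/f(x)) v(x,t). -/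

import Mathlib

open MeasureTheory

/-- Partial derivative `∂_i w (x)` of a scalar function on `ℝ^d`. -/
noncomputable def pd {d : ℕ} (w : EuclideanSpace ℝ (Fin d) → ℝ) (i : Fin d)
    (x : EuclideanSpace ℝ (Fin d)) : ℝ :=
  fderiv ℝ w x (EuclideanSpace.single i 1)

/-- The elliptic operator `L w = div(A ∇w) + b · ∇w
  = Σ_i ∂_i (Σ_j A_{ij} ∂_j w) + Σ_i b_i ∂_i w`. -/
noncomputable def ellOp {d : ℕ} (A : EuclideanSpace ℝ (Fin d) → Matrix (Fin d) (Fin d) ℝ)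
    (b : EuclideanSpace ℝ (Fin d) → Fin d → ℝ)
    (w : EuclideanSpace ℝ (Fin d) → ℝ) (x : EuclideanSpace ℝ (Fin d)) : ℝ :=
  (∑ i, pd (fun y => ∑ j, A y i j * pd w j y) i x) + ∑ i, b x i * pd w i x

section helpers

variable {d : ℕ}

theorem pd_slice {g : EuclideanSpace ℝ (Fin d) × ℝ → ℝ} (hg : Differentiable ℝ g)
    (i : Fin d) (x : EuclideanSpace ℝ (Fin d)) (t : ℝ) :
    pd (fun y => g (y, t)) i x = fderiv ℝ g (x, t) (EuclideanSpace.single i 1, 0) := by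
  have h1 : HasFDerivAt (fun y : EuclideanSpace ℝ (Fin d) => (y, t))
      (ContinuousLinearMap.inl ℝ (EuclideanSpace ℝ (Fin d)) ℝ) x :=
    hasFDerivAt_prodMk_left x t
  have h2 := (hg (x, t)).hasFDerivAt.comp x h1
  have h3 : fderiv ℝ (fun y => g (y, t)) x = _ := h2.fderiv
  unfold pd
  rw [h3]
  simp

theorem hasDerivAt_slice {g : EuclideanSpace ℝ (Fin d) × ℝ → ℝ} (hg : Differentiable ℝ g)
    (x : EuclideanSpace ℝ (Fin d)) (t : ℝ) :
    HasDerivAt (fun s => g (x, s)) (fderiv ℝ g (x, t) (0, 1)) t := by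
  have h1 : HasFDerivAt (fun s : ℝ => (x, s))
      (ContinuousLinearMap.inr ℝ (EuclideanSpace ℝ (Fin d)) ℝ) t :=
    hasFDerivAt_prodMk_right x t
  have h2 := ((hg (x, t)).hasFDerivAt.comp t h1).hasDerivAt
  simp only [ContinuousLinearMap.comp_apply, ContinuousLinearMap.inr_apply] at h2
  exact h2

theorem contDiff_fderiv_dir {g : EuclideanSpace ℝ (Fin d) × ℝ → ℝ} {n m : WithTop ℕ∞}
    (hg : ContDiff ℝ n g) (hmn : m + 1 ≤ n) (a : EuclideanSpace ℝ (Fin d) × ℝ) :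
    ContDiff ℝ m (fun q => fderiv ℝ g q a) :=
  (hg.fderiv_right hmn).clm_apply contDiff_const

theorem fderiv_dir_comm {g : EuclideanSpace ℝ (Fin d) × ℝ → ℝ} (hg : ContDiff ℝ 2 g)
    (a b q : EuclideanSpace ℝ (Fin d) × ℝ) :
    fderiv ℝ (fun p => fderiv ℝ g p a) q b = fderiv ℝ (fun p => fderiv ℝ g p b) q a := by
  have hd : DifferentiableAt ℝ (fderiv ℝ g) q :=
    ((hg.fderiv_right (m := 1) (by norm_num)).differentiable (by norm_num)) q
  have key : ∀ a b, fderiv ℝ (fun p => fderiv ℝ g p a) q b = fderiv ℝ (fderiv ℝ g) q b a := by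
    intro a b
    rw [fderiv_clm_apply hd (differentiableAt_const a)]
    simp
  rw [key, key]
  exact (hg.contDiffAt.isSymmSndFDerivAt (by simp)) b a

theorem hasDerivAt_pd {g : EuclideanSpace ℝ (Fin d) × ℝ → ℝ} (hg : ContDiff ℝ 2 g)
    (i : Fin d) (x : EuclideanSpace ℝ (Fin d)) (t : ℝ) :
    HasDerivAt (fun s => pd (fun y => g (y, s)) i x)
      (pd (fun y => deriv (fun s => g (y, s)) t) i x) t := by
  have hg1 : Differentiable ℝ g := hg.differentiable (by norm_num)
  have e1 : (fun s => pd (fun y => g (y, s)) i x)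
      = fun s => (fun q => fderiv ℝ g q (EuclideanSpace.single i 1, 0)) (x, s) := by
    funext s; exact pd_slice hg1 i x s
  have e2 : (fun y => deriv (fun s => g (y, s)) t)
      = fun y => (fun q => fderiv ℝ g q (0, 1)) (y, t) := by
    funext y; exact (hasDerivAt_slice hg1 y t).deriv
  have D : ∀ a, Differentiable ℝ (fun q => fderiv ℝ g q a) := fun a =>
    (contDiff_fderiv_dir (m := 1) hg (by norm_num) a).differentiable (by norm_num)
  rw [e1, e2, pd_slice (D _), fderiv_dir_comm hg]
  exact hasDerivAt_slice (D _) x t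

theorem contDiff_pd_space {w : EuclideanSpace ℝ (Fin d) → ℝ} (hw : ContDiff ℝ 2 w)
    (j : Fin d) : ContDiff ℝ 1 (fun y => pd w j y) :=
  (hw.fderiv_right (m := 1) (by norm_num)).clm_apply contDiff_const

theorem ellOp_expand (A : EuclideanSpace ℝ (Fin d) → Matrix (Fin d) (Fin d) ℝ)
    (hA : ∀ i j : Fin d, ContDiff ℝ 1 fun x => A x i j)
    (b : EuclideanSpace ℝ (Fin d) → Fin d → ℝ)
    {w : EuclideanSpace ℝ (Fin d) → ℝ} (hw : ContDiff ℝ 2 w)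
    (x : EuclideanSpace ℝ (Fin d)) :
    ellOp A b w x = (∑ i, ∑ j, (A x i j * pd (fun y => pd w j y) i x
      + pd (fun y => A y i j) i x * pd w j x)) + ∑ i, b x i * pd w i x := by
  unfold ellOp
  congr 1
  refine Finset.sum_congr rfl fun i _ => ?_
  have hA1 : ∀ j, DifferentiableAt ℝ (fun y => A y i j) x := fun j =>
    (hA i j).differentiable (by norm_num) x
  have hp : ∀ j, DifferentiableAt ℝ (fun y => pd w j y) x := fun j =>
    (contDiff_pd_space hw j).differentiable (by norm_num) x
  have h := HasFDerivAt.fun_sum (u := Finset.univ)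
    (fun j _ => (hA1 j).hasFDerivAt.mul (hp j).hasFDerivAt)
  have h' : pd (fun y => ∑ j, A y i j * pd w j y) i x = _ :=
    congrArg (fun l => l (EuclideanSpace.single i 1)) h.fderiv
  rw [h']
  simp only [ContinuousLinearMap.sum_apply, ContinuousLinearMap.add_apply,
    ContinuousLinearMap.smul_apply, smul_eq_mul]
  refine Finset.sum_congr rfl fun j _ => ?_
  simp only [pd]
  ring

theorem hasDerivAt_ellOp (A : EuclideanSpace ℝ (Fin d) → Matrix (Fin d) (Fin d) ℝ)
    (hA : ∀ i j : Fin d, ContDiff ℝ 1 fun x => A x i j)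
    (b : EuclideanSpace ℝ (Fin d) → Fin d → ℝ)
    {g : EuclideanSpace ℝ (Fin d) × ℝ → ℝ} (hg : ContDiff ℝ 3 g)
    (x : EuclideanSpace ℝ (Fin d)) (t : ℝ) :
    HasDerivAt (fun s => ellOp A b (fun y => g (y, s)) x)
      (ellOp A b (fun y => deriv (fun s => g (y, s)) t) x) t := by
  have hg2 : ContDiff ℝ 2 g := hg.of_le (by norm_num)
  have hg1 : Differentiable ℝ g := hg.differentiable (by norm_num)
  have hs : ∀ s, ContDiff ℝ 2 (fun y => g (y, s)) := fun s =>
    hg2.comp (contDiff_id.prodMk contDiff_const)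
  have hv : ContDiff ℝ 2 (fun y => deriv (fun s => g (y, s)) t) := by
    have e2 : (fun y => deriv (fun s => g (y, s)) t)
        = fun y => (fun q => fderiv ℝ g q (0, 1)) (y, t) := by
      funext y; exact (hasDerivAt_slice hg1 y t).deriv
    rw [e2]
    exact (contDiff_fderiv_dir (m := 2) hg (by norm_num) _).comp
      (contDiff_id.prodMk contDiff_const)
  have e : (fun s => ellOp A b (fun y => g (y, s)) x) = _ :=
    funext fun s => ellOp_expand A hA b (hs s) x
  rw [e, ellOp_expand A hA b hv x]
  have hh : ∀ i j, HasDerivAt (fun s => pd (fun y => pd (fun z => g (z, s)) j y) i x)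
      (pd (fun y => pd (fun z => deriv (fun s => g (z, s)) t) j y) i x) t := by
    intro i j
    have hj : ContDiff ℝ 2 (fun q => fderiv ℝ g q (EuclideanSpace.single j 1, 0)) :=
      contDiff_fderiv_dir hg (by norm_num) _
    have h := hasDerivAt_pd hj i x t
    simp only [← pd_slice hg1] at h
    have e3 : (fun y => deriv (fun s => pd (fun z => g (z, s)) j y) t)
        = fun y => pd (fun z => deriv (fun s => g (z, s)) t) j y := by
      funext y; exact (hasDerivAt_pd hg2 j y t).deriv
    rw [e3] at h
    exact h
  refine HasDerivAt.add (HasDerivAt.fun_sum fun i _ => HasDerivAt.fun_sum fun j _ => ?_)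
    (HasDerivAt.fun_sum fun i _ => (hasDerivAt_pd hg2 i x t).const_mul _)
  exact ((hh i j).const_mul _).add ((hasDerivAt_pd hg2 j x t).const_mul _)

end helpers

/-- Let `u` be of class `C²` in time and `C³` in space with continuous
mixed derivatives (formalized as joint `C³` regularity of `(x,t) ↦ u(x,t)`), solving
`u_t = Lu + c u` on `ℝ^d × [0,∞)` with `u(·,0) = f`, where `Lw = div(A∇w) + b·∇w` with
`A` `C¹` symmetric, `b` `C¹`, `f` `C²` and `f ≠ 0` on an open set `Ω`.  Then `v := ∂_t u`
satisfies, for all `x ∈ Ω` and `t ∈ [0,T]`, the nonlinear equation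
`v_t = Lv − (Lf/f) v + (v(·,0)/f) v`. -/
theorem time_derivative_satisfies_nonlinear_equation
    {d : ℕ} (hd : 2 ≤ d)
    (A : EuclideanSpace ℝ (Fin d) → Matrix (Fin d) (Fin d) ℝ)
    (hA : ∀ i j : Fin d, ContDiff ℝ 1 fun x => A x i j)
    (hAsym : ∀ x, (A x).IsSymm)
    (b : EuclideanSpace ℝ (Fin d) → Fin d → ℝ)
    (hb : ∀ i : Fin d, ContDiff ℝ 1 fun x => b x i)
    (c : EuclideanSpace ℝ (Fin d) → ℝ)
    (f : EuclideanSpace ℝ (Fin d) → ℝ) (hf : ContDiff ℝ 2 f)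
    (Ω : Set (EuclideanSpace ℝ (Fin d))) (hΩ : IsOpen Ω)
    (hfΩ : ∀ x ∈ Ω, f x ≠ 0)
    (T : ℝ) (hT : 0 < T)
    (u : EuclideanSpace ℝ (Fin d) → ℝ → ℝ)
    (hu : ContDiff ℝ 3 fun q : EuclideanSpace ℝ (Fin d) × ℝ => u q.1 q.2)
    (hpde : ∀ x, ∀ t : ℝ, 0 ≤ t →
      deriv (u x) t = ellOp A b (fun y => u y t) x + c x * u x t)
    (hinit : ∀ x, u x 0 = f x) :
    ∀ x ∈ Ω, ∀ t ∈ Set.Icc (0 : ℝ) T,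
      deriv (deriv (u x)) t
        = ellOp A b (fun y => deriv (u y) t) x
            - (ellOp A b f x / f x) * deriv (u x) t
            + (deriv (u x) 0 / f x) * deriv (u x) t := by
  intro x hx t ht
  have hfx := hfΩ x hx
  have hu1 := hu.differentiable (by norm_num)
  have hL := hasDerivAt_ellOp A hA b hu x t
  simp only at hL
  have hux : HasDerivAt (u x) (deriv (u x) t) t :=
    (hasDerivAt_slice hu1 x t).differentiableAt.hasDerivAt
  have hR := hL.add (hux.const_mul (c x))
  have hv : DifferentiableAt ℝ (deriv (u x)) t := by
    have e : deriv (u x) = fun s => (fun q => fderiv ℝ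
        (fun q : EuclideanSpace ℝ (Fin d) × ℝ => u q.1 q.2) q (0, 1)) (x, s) := by
      funext s; exact (hasDerivAt_slice hu1 x s).deriv
    rw [e]
    exact (hasDerivAt_slice ((contDiff_fderiv_dir (m := 2) hu (by norm_num) _).differentiable
      (by norm_num)) x t).differentiableAt
  have hR' : HasDerivWithinAt (deriv (u x))
      (ellOp A b (fun y => deriv (u y) t) x + c x * deriv (u x) t) (Set.Ici t) t :=
    hR.hasDerivWithinAt.congr (fun s hs => hpde x s (ht.1.trans hs)) (hpde x t ht.1)
  have heq : deriv (deriv (u x)) t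
      = ellOp A b (fun y => deriv (u y) t) x + c x * deriv (u x) t :=
    (uniqueDiffWithinAt_Ici t).eq_deriv _ hv.hasDerivAt.hasDerivWithinAt hR'
  have h0 := hpde x 0 le_rfl
  have ef : (fun y => u y 0) = f := funext hinit
  rw [ef, hinit] at h0
  rw [heq, h0]
  field_simp
  ring
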